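/- Let f : ℝ^N → (−∞,∞] be proper and closed, let h : ℝ^N → ℝ be convex and differentiable, let x̄ ∈ dom f, and let m : ℝ^N → (−∞,∞] be proper, closed and convex with 0 ≤ f(x) − m(x) ≤ L·D_h(x, x̄) for all x ∈ ℝ^N, where L > 0. Let 0 < α ≤ 1/L and let x̂ be a global minimizer of u ↦ m(u) + (1/α)·D_h(u, x̄). Then for every x ∈ dom f: f(x̂) − f(x) ≤ (1/α)·(D_h(x, x̄) − D_h(x, x̂)). -/

import Mathlib

open scoped RealInnerProductSpace
open Filter Topology

/-- The Bregman distance `D_h(x, u) = h x − h u − ⟨∇h u, x − u⟩` associated with `h`. -/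
noncomputable def breg {N : ℕ} (h : EuclideanSpace ℝ (Fin N) → ℝ)
    (x u : EuclideanSpace ℝ (Fin N)) : ℝ :=
  h x - h u - ⟪gradient h u, x - u⟫

/-- Convexity for extended-real-valued functions. -/
def ERealConvex {N : ℕ} (f : EuclideanSpace ℝ (Fin N) → EReal) : Prop :=
  ∀ x y : EuclideanSpace ℝ (Fin N), ∀ a b : ℝ, 0 ≤ a → 0 ≤ b → a + b = 1 →
    f (a • x + b • y) ≤ (a : EReal) * f x + (b : EReal) * f y

/-!
Fermat's rule along the segment from `x̂` to `x` turns global minimality of `x̂` into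
`m x̂ ≤ m x + (1/α) (∇h(x̂) - ∇h(x̄)) (x - x̂)`. The three-point identity rewrites the last term
through Bregman distances, so that `m x̂ + (1/α) D(x̂, x̄) ≤ m x + (1/α) (D(x, x̄) - D(x, x̂))`.
Since `L ≤ 1/α`, the left side dominates `m x̂ + L D(x̂, x̄) ≥ f x̂`, while `m x ≤ f x`.
-/

lemma ERealConvex.convex_epigraph {N : ℕ} {m : EuclideanSpace ℝ (Fin N) → EReal}
    (hm : ERealConvex m) : Convex ℝ {w : EuclideanSpace ℝ (Fin N) × ℝ | m w.1 ≤ w.2} := by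
  rintro ⟨x, r⟩ hx ⟨y, s⟩ hy a b ha hb hab
  calc m (a • x + b • y) ≤ a * m x + b * m y := hm x y a b ha hb hab
    _ ≤ a * r + b * s := by
      gcongr
      exacts [hx, hy]
    _ = ((a * r + b * s : ℝ) : EReal) := by norm_cast

section BregmanDist

variable {E : Type*} [AddCommGroup E] [Module ℝ E]

/-- The Bregman distance of `h` from `u` to `x`, relative to a linear functional `p` that plays the
role of the derivative of `h` at `u`. Keeping `p` as an argument covers subgradients as well as
gradients, and avoids a junk value where `h` is not differentiable. -/
def bregmanDist (h : E → ℝ) (p : Module.Dual ℝ E) (x u : E) : ℝ :=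
  h x - h u - p (x - u)

variable {h : E → ℝ} {p q : Module.Dual ℝ E}

lemma bregmanDist_three_point (x z u : E) :
    bregmanDist h p x u - bregmanDist h p z u - bregmanDist h q x z = q (x - z) - p (x - z) := by
  simp only [bregmanDist, map_sub]
  ring

lemma hasLineDerivAt_bregmanDist_left {d : ℝ} {z v : E} (hd : HasLineDerivAt ℝ h d z v) (u : E) :
    HasLineDerivAt ℝ (fun x ↦ bregmanDist h p x u) (d - p v) z v := by
  have hp : HasDerivAt (fun t : ℝ ↦ p (z + t • v - u)) (p v) 0 := by
    simpa using (((hasDerivAt_id (0 : ℝ)).mul_const (p v)).const_add (p z)).sub_const (p u)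
  exact (HasDerivAt.sub_const (h u) hd).sub hp

lemma add_lineDeriv_nonneg_of_forall_le {ψ : E → ℝ} {z v : E} {c d : ℝ}
    (hψ : HasLineDerivAt ℝ ψ d z v)
    (hle : ∀ t ∈ Set.Ioc (0 : ℝ) 1, ψ z ≤ t * c + ψ (z + t • v)) : 0 ≤ c + d := by
  refine ge_of_tendsto (hψ.tendsto_slope_zero_right.const_add c) ?_
  filter_upwards [Ioc_mem_nhdsGT (zero_lt_one' ℝ)] with t ht
  have hslope : c + t⁻¹ * (ψ (z + t • v) - ψ z) = t⁻¹ * (t * c + ψ (z + t • v) - ψ z) := by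
    have := ht.1.ne'
    field_simp
    ring
  rw [smul_eq_mul, hslope]
  exact mul_nonneg (inv_nonneg.mpr ht.1.le) (sub_nonneg.mpr (hle t ht))

lemma le_add_lineDeriv_of_forall_add_le {m : E → EReal} {ψ : E → ℝ} {x z : E} {d : ℝ}
    (hm : Convex ℝ {w : E × ℝ | m w.1 ≤ w.2}) (hψ : HasLineDerivAt ℝ ψ d z (x - z))
    (hmin : ∀ u, m z + (ψ z : EReal) ≤ m u + (ψ u : EReal)) :
    m z ≤ m x + (d : EReal) := by
  have hminx := hmin x
  induction hx : m x with
  | top => simp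
  | bot => simpa [hx] using hminx
  | coe b =>
    induction hz : m z with
    | bot => simp
    | top => simp [hx, hz, ← EReal.coe_add] at hminx
    | coe a =>
      have hsegment (t : ℝ) (ht : t ∈ Set.Ioc (0 : ℝ) 1) :
          ψ z ≤ t * (b - a) + ψ (z + t • (x - z)) := by
        have hconv : m (z + t • (x - z)) ≤ ((a + t * (b - a) : ℝ) : EReal) :=
          hm.add_smul_sub_mem (x := (z, a)) (y := (x, b)) hz.le hx.le ⟨ht.1.le, ht.2⟩
        have hle := (hmin (z + t • (x - z))).trans (add_le_add_left hconv _)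
        rw [hz] at hle
        norm_cast at hle
        linarith
      have := add_lineDeriv_nonneg_of_forall_le hψ hsegment
      norm_cast
      linarith

lemma add_bregmanDist_le_of_forall_add_le {m : E → EReal} {c : ℝ} {x z u : E}
    (hm : Convex ℝ {w : E × ℝ | m w.1 ≤ w.2}) (hq : HasLineDerivAt ℝ h (q (x - z)) z (x - z))
    (hmin : ∀ y, m z + ((c * bregmanDist h p z u : ℝ) : EReal) ≤
      m y + ((c * bregmanDist h p y u : ℝ) : EReal)) :
    m z + ((c * bregmanDist h p z u : ℝ) : EReal) ≤
      m x + ((c * (bregmanDist h p x u - bregmanDist h q x z) : ℝ) : EReal) := by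
  have hderiv : HasLineDerivAt ℝ (fun y ↦ c * bregmanDist h p y u)
      (c * (q (x - z) - p (x - z))) z (x - z) :=
    HasDerivAt.const_mul c (hasLineDerivAt_bregmanDist_left hq u)
  have hfermat := le_add_lineDeriv_of_forall_add_le hm hderiv hmin
  calc m z + ((c * bregmanDist h p z u : ℝ) : EReal)
      ≤ m x + ((c * (q (x - z) - p (x - z)) : ℝ) : EReal) +
          ((c * bregmanDist h p z u : ℝ) : EReal) := add_le_add_left hfermat _
    _ = m x + ((c * (bregmanDist h p x u - bregmanDist h q x z) : ℝ) : EReal) := by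
      rw [add_assoc, ← EReal.coe_add, ← bregmanDist_three_point (h := h) x z u]
      ring_nf

theorem convex_descent_relation_general {f m : E → EReal} {L α : ℝ} {xb xh x : E}
    (hmconv : Convex ℝ {w : E × ℝ | m w.1 ≤ w.2}) (hbot : m xh ≠ ⊥)
    (hmf : ∀ z, m z ≤ f z) (hq : ∀ v, HasLineDerivAt ℝ h (q v) xh v)
    (hmodel : f xh - m xh ≤ ((L * bregmanDist h p xh xb : ℝ) : EReal))
    (hα0 : 0 < α) (hα1 : α ≤ 1 / L)
    (hmin : ∀ u, m xh + ((1 / α * bregmanDist h p xh xb : ℝ) : EReal) ≤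
      m u + ((1 / α * bregmanDist h p u xb : ℝ) : EReal))
    (hx : f x ≠ ⊤) :
    f xh - f x ≤ ((1 / α * (bregmanDist h p x xb - bregmanDist h q x xh) : ℝ) : EReal) := by
  have hL : 0 < L := one_div_pos.mp (hα0.trans_le hα1)
  have htop : m xh ≠ ⊤ := by
    have hsum := (hmin x).trans_lt
      (EReal.add_lt_top (ne_top_of_le_ne_top hx (hmf x)) (EReal.coe_ne_top _))
    exact fun hxh ↦ hsum.ne (by rw [hxh, EReal.top_add_coe])
  have hdist : 0 ≤ bregmanDist h p xh xb := by
    have hgap := (EReal.sub_nonneg (.inr htop) (.inr hbot)).mpr (hmf xh)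
    exact nonneg_of_mul_nonneg_right (EReal.coe_nonneg.mp (hgap.trans hmodel)) hL
  apply EReal.sub_le_of_le_add'
  calc f xh ≤ m xh + ((L * bregmanDist h p xh xb : ℝ) : EReal) := by
        rw [add_comm]
        exact (EReal.sub_le_iff_le_add (.inl hbot) (.inl htop)).mp hmodel
    _ ≤ m xh + ((1 / α * bregmanDist h p xh xb : ℝ) : EReal) := by
        gcongr
        exact (le_one_div hα0 hL).mp hα1
    _ ≤ m x + ((1 / α * (bregmanDist h p x xb - bregmanDist h q x xh) : ℝ) : EReal) :=
        add_bregmanDist_le_of_forall_add_le hmconv (hq _) hmin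
    _ ≤ f x + ((1 / α * (bregmanDist h p x xb - bregmanDist h q x xh) : ℝ) : EReal) := by
        gcongr
        exact hmf x

end BregmanDist

lemma breg_eq_bregmanDist {N : ℕ} (h : EuclideanSpace ℝ (Fin N) → ℝ)
    (x u : EuclideanSpace ℝ (Fin N)) :
    breg h x u = bregmanDist h (innerₛₗ ℝ (gradient h u)) x u :=
  rfl

/-- **Key inequality in the convex setting.** If `0 ≤ f − m ≤ L·D_h(·, x̄)`,
`0 < α ≤ 1/L`, and `x̂` globally minimizes `u ↦ m u + (1/α)·D_h(u, x̄)`, then for every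
`x ∈ dom f`: `f x̂ − f x ≤ (1/α)·(D_h(x, x̄) − D_h(x, x̂))`. -/
theorem convex_descent_relation (N : ℕ)
    (f : EuclideanSpace ℝ (Fin N) → EReal)
    (hfbot : ∀ z, f z ≠ ⊥) (hfproper : ∃ z, f z ≠ ⊤)
    (hfclosed : LowerSemicontinuous f)
    (h : EuclideanSpace ℝ (Fin N) → ℝ)
    (hhconv : ConvexOn ℝ Set.univ h) (hhdiff : Differentiable ℝ h)
    (xb : EuclideanSpace ℝ (Fin N)) (hxb : f xb ≠ ⊤)
    (m : EuclideanSpace ℝ (Fin N) → EReal)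
    (hmbot : ∀ z, m z ≠ ⊥) (hmproper : ∃ z, m z ≠ ⊤)
    (hmclosed : LowerSemicontinuous m) (hmconv : ERealConvex m)
    (L : ℝ) (hL : 0 < L)
    (hmodel : ∀ z, m z ≤ f z ∧ f z - m z ≤ ((L * breg h z xb : ℝ) : EReal))
    (α : ℝ) (hα0 : 0 < α) (hα1 : α ≤ 1 / L)
    (xh : EuclideanSpace ℝ (Fin N))
    (hmin : ∀ u, m xh + (((1/α) * breg h xh xb : ℝ) : EReal) ≤
                 m u + (((1/α) * breg h u xb : ℝ) : EReal)) :
    ∀ x, f x ≠ ⊤ →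
      f xh - f x ≤ (((1/α) * (breg h x xb - breg h x xh) : ℝ) : EReal) := by
  intro x hx
  have hgrad (v) : HasLineDerivAt ℝ h (innerₛₗ ℝ (gradient h xh) v) xh v :=
    (hhdiff xh).hasGradientAt.hasFDerivAt.hasLineDerivAt v
  simp only [breg_eq_bregmanDist] at hmodel hmin ⊢
  exact convex_descent_relation_general hmconv.convex_epigraph (hmbot xh) (fun z ↦ (hmodel z).1)
    hgrad (hmodel xh).2 hα0 hα1 hmin hx
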